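/- (Strong homogeneity of the Hilbert cube, part of Theorem 2.5.) The Hilbert cube is strongly n-homogeneous for every finite n: for any two finite subsets F and G of the Hilbert cube 𝒰 and any bijection e : F → G, there exists a homeomorphism h : 𝒰 → 𝒰 such that h(x) = e(x) for every x ∈ F. -/

import Mathlib

/-!
The proof brings both finite sets to the same standard position.

**Moving into the pseudo-interior.** A homeomorphism taking finitely many given points into
`(0,1)^ℕ` is found by a Baire category argument. Pairs of mutually inverse continuous self-maps form
a closed subset of the complete space `C(𝒰, 𝒰) × C(𝒰, 𝒰)`, hence a Baire space. For a point `p` and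
a coordinate `j`, the homeomorphisms `h` with `h(p)_j ∈ (0,1)` form an open set, and this set is
dense (`dense_interior_coord`): if `h(p)_j` is `0` or `1`, compose `h` with a homeomorphism of the
square spanned by the coordinates `j` and `m` that displaces the `j`-th coordinate by at most `ε`
and yet slides the point off the side of the square on which it lies
(`exists_square_homeomorph`). The `m`-th coordinate may move a lot, but this is harmless for large
`m`, since convergence in the product is coordinatewise (`tendsto_liftSquare`).

**Moving inside the pseudo-interior.** If finitely many points are distinguished by their
coordinates in `S`, then their coordinates outside `S` can be changed at will within `(0,1)`
(`exists_homeomorph_of_eqOn`): use `x_i ↦ x_i ^ a_i(x|S)`, where the exponents depend continuously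
on `x|S` and are prescribed at finitely many points by Tietze's theorem. With `S` a finite
separating set of coordinates, and then with `S = {m}` for some `m` outside it, the `k`-th point is
moved to the constant sequence `c k` (`exists_homeomorph_const`).
-/

/-- The Hilbert cube `𝒰 = [0,1]^ℕ` with the product topology. -/
abbrev HilbertCube : Type := ℕ → unitInterval

open scoped Topology

/-! ### Changing coordinates inside the pseudo-interior -/

/-- The power map `x ↦ x ^ exp b` of `[0,1]`. Writing the exponent as `exp b` lets `b` range over
all of `ℝ`, with `-b` giving the inverse map. -/
noncomputable def pw (b : ℝ) (x : unitInterval) : unitInterval :=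
  ⟨(x : ℝ) ^ Real.exp b, Real.rpow_nonneg x.2.1 _,
    Real.rpow_le_one x.2.1 x.2.2 (Real.exp_pos b).le⟩

theorem pw_neg_pw (b : ℝ) (x : unitInterval) : pw (-b) (pw b x) = x := by
  apply Subtype.ext
  change ((x : ℝ) ^ Real.exp b) ^ Real.exp (-b) = x
  rw [← Real.rpow_mul x.2.1, ← Real.exp_add, add_neg_cancel, Real.exp_zero, Real.rpow_one]

theorem continuous_pw : Continuous fun p : ℝ × unitInterval => pw p.1 p.2 := by
  refine Continuous.subtype_mk ?_ _
  exact Continuous.rpow (by fun_prop) (by fun_prop) fun p => Or.inr (Real.exp_pos _)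

theorem exists_pw_eq {p q : unitInterval} (hp0 : 0 < p) (hp1 : p < 1) (hq0 : 0 < q)
    (hq1 : q < 1) : ∃ b : ℝ, pw b p = q := by
  have hp : Real.log p < 0 := Real.log_neg hp0 hp1
  have hq : Real.log q < 0 := Real.log_neg hq0 hq1
  refine ⟨Real.log (Real.log q / Real.log p), Subtype.ext ?_⟩
  change (p : ℝ) ^ Real.exp _ = q
  have hp0' : (0 : ℝ) < p := hp0
  have hq0' : (0 : ℝ) < q := hq0
  rw [Real.exp_log (div_pos_of_neg_of_neg hq hp), Real.rpow_def_of_pos hp0',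
    mul_div_cancel₀ _ hp.ne, Real.exp_log hq0']

theorem exists_continuousMap_eq {X ι : Type*} [TopologicalSpace X] [T2Space X] [NormalSpace X]
    [Finite ι] {p : ι → X} (hp : Function.Injective p) (v : ι → ℝ) :
    ∃ b : C(X, ℝ), ∀ k, b (p k) = v k := by
  let _ : TopologicalSpace ι := ⊥
  have : DiscreteTopology ι := ⟨rfl⟩
  obtain ⟨b, hb⟩ := ContinuousMap.exists_extension
    (continuous_of_discreteTopology.isClosedEmbedding hp) ⟨v, continuous_of_discreteTopology⟩
  exact ⟨b, fun k => DFunLike.congr_fun hb k⟩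

/-- Points distinguished by their coordinates in `S` can have all their coordinates outside `S`
changed to arbitrary values in `(0,1)`, without moving the coordinates in `S`. -/
theorem exists_homeomorph_of_eqOn {ι : Type*} [Finite ι] (S : Set ℕ) (f g : ι → HilbertCube)
    (hinj : Function.Injective fun k => S.domRestrict (f k))
    (hS : ∀ k, ∀ i ∈ S, f k i = g k i)
    (hf : ∀ k, ∀ i ∉ S, 0 < f k i ∧ f k i < 1) (hg : ∀ k, ∀ i ∉ S, 0 < g k i ∧ g k i < 1) :
    ∃ h : HilbertCube ≃ₜ HilbertCube, ∀ k, h (f k) = g k := by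
  classical
  have key : ∀ i : ℕ, ∃ b : C(S → unitInterval, ℝ), i ∉ S →
      ∀ k, pw (b (S.domRestrict (f k))) (f k i) = g k i := by
    intro i
    by_cases hi : i ∈ S
    · exact ⟨0, fun h => absurd hi h⟩
    · choose v hv using fun k => exists_pw_eq (hf k i hi).1 (hf k i hi).2 (hg k i hi).1 (hg k i hi).2
      obtain ⟨b, hb⟩ := exists_continuousMap_eq hinj v
      exact ⟨b, fun _ k => by rw [show b (S.domRestrict (f k)) = v k from hb k, hv]⟩
  choose b hb using key
  -- `T 1` is the required homeomorphism and `T (-1)` its inverse: the exponents depend only on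
  -- the coordinates in `S`, which `T` preserves.
  let T (ε : ℝ) (x : HilbertCube) : HilbertCube := fun i =>
    if i ∈ S then x i else pw (ε * b i (S.domRestrict x)) (x i)
  have hTc : ∀ ε, Continuous (T ε) := by
    intro ε
    refine continuous_pi fun i => ?_
    by_cases hi : i ∈ S
    · simpa [T, hi] using continuous_apply i
    · simp only [T, hi, if_false]
      refine continuous_pw.comp (Continuous.prodMk ?_ (continuous_apply i))
      have : Continuous fun x : HilbertCube => S.domRestrict x :=
        continuous_pi fun i => continuous_apply _
      fun_prop
  have hTr : ∀ ε x, S.domRestrict (T ε x) = S.domRestrict x := by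
    intro ε x
    ext i
    simp [T]
  have hTT : ∀ ε x, T (-ε) (T ε x) = x := by
    intro ε x
    funext i
    by_cases hi : i ∈ S
    · simp [T, hi]
    · have : T (-ε) (T ε x) i = pw (-ε * b i (S.domRestrict (T ε x))) (T ε x i) := if_neg hi
      rw [this, hTr, neg_mul, show T ε x i = pw (ε * b i (S.domRestrict x)) (x i) from if_neg hi,
        pw_neg_pw]
  refine ⟨⟨⟨T 1, T (-1), hTT 1, fun x => by simpa using hTT (-1) x⟩, hTc 1, hTc (-1)⟩, ?_⟩
  intro k
  funext i
  change T 1 (f k) i = g k i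
  by_cases hi : i ∈ S
  · simp [T, hi, hS k i hi]
  · simp only [T, hi, if_false, one_mul]
    exact hb i hi k

/-! ### Sliding along the boundary of a square -/

/-- The power map `pw b` as a homeomorphism of `[0,1]`. -/
noncomputable def pwHomeo (b : ℝ) : unitInterval ≃ₜ unitInterval where
  toFun := pw b
  invFun := pw (-b)
  left_inv := pw_neg_pw b
  right_inv x := by simpa using pw_neg_pw (-b) x
  continuous_toFun := continuous_pw.comp (Continuous.prodMk_right b)
  continuous_invFun := continuous_pw.comp (Continuous.prodMk_right (-b))

/-- Some homeomorphism of `[0,1]` brings `t` as near to an endpoint as desired; `2 * x - 1` is the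
coordinate in which the interval is `[-1,1]`. -/
theorem exists_homeomorph_lt_abs (t : unitInterval) {r : ℝ} (hr0 : 0 < r) (hr : r < 1) :
    ∃ A : unitInterval ≃ₜ unitInterval, r < |2 * (A t : ℝ) - 1| := by
  by_cases h0 : t = 0
  · exact ⟨Homeomorph.refl _, by simpa [h0] using hr⟩
  by_cases h1 : t = 1
  · refine ⟨Homeomorph.refl _, ?_⟩
    norm_num [h1]
    exact hr
  have hq : (3 + r) / 4 ∈ unitInterval := ⟨by linarith, by linarith⟩
  obtain ⟨b, hb⟩ := exists_pw_eq (q := ⟨(3 + r) / 4, hq⟩) (unitInterval.pos_iff_ne_zero.2 h0)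
    (unitInterval.lt_one_iff_ne_one.2 h1) (Subtype.mk_lt_mk.2 (by linarith))
    (Subtype.mk_lt_mk.2 (by linarith))
  refine ⟨pwHomeo b, lt_of_lt_of_le ?_ (le_abs_self _)⟩
  change r < 2 * (pw b t : ℝ) - 1
  rw [hb]
  change r < 2 * ((3 + r) / 4) - 1
  linarith

section Radial

variable {E : Type*} [NormedAddCommGroup E] [NormedSpace ℝ E]

/-- The norm-preserving rescaling `v ↦ (‖v‖ / ‖L v‖) L v` of a linear automorphism `L`. At `v = 0`
the quotient `0 / 0 = 0` gives the value `0`. -/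
noncomputable def radial (L : E ≃L[ℝ] E) (v : E) : E := (‖v‖ / ‖L v‖) • L v

theorem norm_radial (L : E ≃L[ℝ] E) (v : E) : ‖radial L v‖ = ‖v‖ := by
  rcases eq_or_ne v 0 with rfl | hv
  · simp [radial]
  have : ‖L v‖ ≠ 0 := by simpa using hv
  rw [radial, norm_smul, norm_div, norm_norm, norm_norm, div_mul_cancel₀ _ this]

theorem radial_symm_radial (L : E ≃L[ℝ] E) (v : E) : radial L.symm (radial L v) = v := by
  rcases eq_or_ne v 0 with rfl | hv
  · simp [radial]
  have hv' : ‖v‖ ≠ 0 := by simpa using hv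
  have : ‖L v‖ ≠ 0 := by simpa using hv
  have h2 : L.symm (radial L v) = (‖v‖ / ‖L v‖) • v := by simp [radial]
  rw [radial, norm_radial, h2, norm_smul, smul_smul, norm_div, norm_norm, norm_norm]
  convert one_smul ℝ v using 2
  field_simp

theorem norm_radial_sub_le (L : E ≃L[ℝ] E) (v : E) : ‖radial L v - v‖ ≤ 2 * ‖L v - v‖ := by
  rcases eq_or_ne v 0 with rfl | hv
  · simp [radial]
  have hL : ‖L v‖ ≠ 0 := by simpa using hv
  have h1 : ‖radial L v - L v‖ ≤ ‖L v - v‖ := by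
    have : radial L v - L v = ((‖v‖ - ‖L v‖) / ‖L v‖) • L v := by
      rw [radial, sub_div, div_self hL, sub_smul, one_smul]
    rw [this, norm_smul, norm_div, norm_norm, div_mul_cancel₀ _ hL, norm_sub_rev (L v) v]
    exact abs_norm_sub_norm_le v (L v)
  calc ‖radial L v - v‖ ≤ ‖radial L v - L v‖ + ‖L v - v‖ := norm_sub_le_norm_sub_add_norm_sub _ _ _
    _ ≤ 2 * ‖L v - v‖ := by linarith

theorem continuous_radial (L : E ≃L[ℝ] E) : Continuous (radial L) := by
  refine continuous_iff_continuousAt.2 fun v => ?_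
  rcases eq_or_ne v 0 with rfl | hv
  · have h0 : radial L 0 = 0 := by simp [radial]
    rw [ContinuousAt, h0, tendsto_zero_iff_norm_tendsto_zero]
    simp only [norm_radial]
    simpa using (continuous_norm (E := E)).tendsto 0
  · have hL : ‖L v‖ ≠ 0 := by simpa using hv
    unfold radial
    fun_prop (disch := assumption)

end Radial

/-- The stretch `(u, v) ↦ (u, c v)` of the plane. -/
noncomputable def stretch (c : ℝ) (hc : c ≠ 0) : (ℝ × ℝ) ≃L[ℝ] ℝ × ℝ :=
  (ContinuousLinearEquiv.refl ℝ ℝ).prodCongr (ContinuousLinearEquiv.smulLeft (Units.mk0 c hc))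

theorem stretch_apply (c : ℝ) (hc : c ≠ 0) (v : ℝ × ℝ) : stretch c hc v = (v.1, c * v.2) := rfl
theorem stretch_symm_apply (c : ℝ) (hc : c ≠ 0) (v : ℝ × ℝ) :
    (stretch c hc).symm v = (v.1, c⁻¹ * v.2) := rfl

/-- The identification of the unit square with `[-1,1]²`, the unit ball of the sup norm on `ℝ × ℝ`. -/
def toPlane (p : unitInterval × unitInterval) : ℝ × ℝ := (2 * (p.1 : ℝ) - 1, 2 * (p.2 : ℝ) - 1)

/-- The inverse of `toPlane` on `[-1,1]²`, extended to the plane by clamping coordinates. -/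
noncomputable def ofPlane (v : ℝ × ℝ) : unitInterval × unitInterval :=
  (Set.projIcc 0 1 zero_le_one ((v.1 + 1) / 2), Set.projIcc 0 1 zero_le_one ((v.2 + 1) / 2))

theorem continuous_toPlane : Continuous toPlane := by unfold toPlane; fun_prop

theorem continuous_ofPlane : Continuous ofPlane :=
  Continuous.prodMk (continuous_projIcc.comp (by fun_prop)) (continuous_projIcc.comp (by fun_prop))

theorem ofPlane_toPlane (p : unitInterval × unitInterval) : ofPlane (toPlane p) = p := by
  have h : ∀ x : unitInterval,
      Set.projIcc (0 : ℝ) 1 zero_le_one ((2 * (x : ℝ) - 1 + 1) / 2) = x := by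
    intro x
    rw [show (2 * (x : ℝ) - 1 + 1) / 2 = x by ring]
    exact Set.projIcc_val zero_le_one x
  exact Prod.ext (h p.1) (h p.2)

theorem norm_toPlane_le (p : unitInterval × unitInterval) : ‖toPlane p‖ ≤ 1 := by
  have h : ∀ x : unitInterval, ‖2 * (x : ℝ) - 1‖ ≤ 1 := fun x =>
    abs_le.2 ⟨by linarith [x.2.1], by linarith [x.2.2]⟩
  exact norm_prod_le_iff.2 ⟨h _, h _⟩

theorem toPlane_ofPlane {v : ℝ × ℝ} (hv : ‖v‖ ≤ 1) : toPlane (ofPlane v) = v := by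
  have h : ∀ x : ℝ, ‖x‖ ≤ 1 →
      2 * ((Set.projIcc (0 : ℝ) 1 zero_le_one ((x + 1) / 2) : unitInterval) : ℝ) - 1 = x := by
    intro x hx
    obtain ⟨h1, h2⟩ := abs_le.1 hx
    rw [Set.projIcc_of_mem zero_le_one (x := (x + 1) / 2) ⟨by linarith, by linarith⟩]
    change 2 * ((x + 1) / 2) - 1 = x
    ring
  obtain ⟨h1, h2⟩ := norm_prod_le_iff.1 hv
  exact Prod.ext (h _ h1) (h _ h2)

/-- The action of `radial L` on the unit ball of the sup norm, as a homeomorphism of the unit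
square. -/
noncomputable def squareHomeo (L : (ℝ × ℝ) ≃L[ℝ] ℝ × ℝ) :
    unitInterval × unitInterval ≃ₜ unitInterval × unitInterval where
  toFun p := ofPlane (radial L (toPlane p))
  invFun p := ofPlane (radial L.symm (toPlane p))
  left_inv p := by
    dsimp only
    rw [toPlane_ofPlane ((norm_radial _ _).trans_le (norm_toPlane_le p)), radial_symm_radial,
      ofPlane_toPlane]
  right_inv p := by
    dsimp only
    rw [toPlane_ofPlane ((norm_radial _ _).trans_le (norm_toPlane_le p))]
    have := radial_symm_radial L.symm (toPlane p)
    rw [ContinuousLinearEquiv.symm_symm] at this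
    rw [this, ofPlane_toPlane]
  continuous_toFun := continuous_ofPlane.comp ((continuous_radial L).comp continuous_toPlane)
  continuous_invFun := continuous_ofPlane.comp ((continuous_radial L.symm).comp continuous_toPlane)

theorem toPlane_squareHomeo (L : (ℝ × ℝ) ≃L[ℝ] ℝ × ℝ) (p : unitInterval × unitInterval) :
    toPlane (squareHomeo L p) = radial L (toPlane p) :=
  toPlane_ofPlane ((norm_radial _ _).trans_le (norm_toPlane_le p))

theorem abs_squareHomeo_sub_le (L : (ℝ × ℝ) ≃L[ℝ] ℝ × ℝ) {ε : ℝ}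
    (hL : ∀ v : ℝ × ℝ, ‖v‖ ≤ 1 → ‖L v - v‖ ≤ ε) (p : unitInterval × unitInterval) :
    |((squareHomeo L p).1 : ℝ) - p.1| ≤ ε := by
  have h1 := (norm_radial_sub_le L (toPlane p)).trans
    (mul_le_mul_of_nonneg_left (hL _ (norm_toPlane_le p)) two_pos.le)
  rw [← toPlane_squareHomeo] at h1
  have h2 := (norm_fst_le _).trans h1
  change |(2 * ((squareHomeo L p).1 : ℝ) - 1) - (2 * (p.1 : ℝ) - 1)| ≤ 2 * ε at h2
  rw [show (2 * ((squareHomeo L p).1 : ℝ) - 1) - (2 * (p.1 : ℝ) - 1) =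
    2 * (((squareHomeo L p).1 : ℝ) - p.1) by ring, abs_mul, abs_two] at h2
  linarith

/-- A homeomorphism of the square can slide a point of a vertical side off that side while
displacing first coordinates, in both directions, by at most `ε`: push the point vertically towards
a corner, without changing first coordinates, and then apply the radial map of a slight vertical
stretch, which carries it around the corner. -/
theorem exists_square_homeomorph {ε : ℝ} (hε : 0 < ε) (s t : unitInterval) (hs : s = 0 ∨ s = 1) :
    ∃ K : unitInterval × unitInterval ≃ₜ unitInterval × unitInterval,
      (∀ p, |((K p).1 : ℝ) - p.1| ≤ ε) ∧ (∀ p, |((K.symm p).1 : ℝ) - p.1| ≤ ε) ∧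
      0 < (K (s, t)).1 ∧ (K (s, t)).1 < 1 := by
  have hc : 0 < 1 + ε := by linarith
  obtain ⟨A, hA⟩ := exists_homeomorph_lt_abs t (inv_pos.2 hc) (inv_lt_one_of_one_lt₀ (by linarith))
  set L := stretch (1 + ε) hc.ne' with hLdef
  have hw : ∀ v : ℝ × ℝ, ‖v‖ ≤ 1 → |v.2| ≤ 1 := fun v hv => (norm_snd_le v).trans hv
  refine ⟨((Homeomorph.refl _).prodCongr A).trans (squareHomeo L), fun p => ?_, fun p => ?_, ?_⟩
  · refine abs_squareHomeo_sub_le L (fun v hv => ?_) (p.1, A p.2)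
    rw [hLdef, stretch_apply]
    refine norm_prod_le_iff.2 ⟨by simpa using hε.le, ?_⟩
    change |(1 + ε) * v.2 - v.2| ≤ ε
    rw [show (1 + ε) * v.2 - v.2 = ε * v.2 by ring, abs_mul, abs_of_pos hε]
    nlinarith [hw v hv]
  · refine abs_squareHomeo_sub_le L.symm (fun v hv => ?_) p
    rw [hLdef, stretch_symm_apply]
    refine norm_prod_le_iff.2 ⟨by simpa using hε.le, ?_⟩
    change |(1 + ε)⁻¹ * v.2 - v.2| ≤ ε
    have h3 : (1 + ε)⁻¹ * v.2 - v.2 = -(ε * (1 + ε)⁻¹ * v.2) := by field_simp; ring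
    have h4 : (1 + ε)⁻¹ ≤ 1 := inv_le_one_of_one_le₀ (by linarith)
    have h5 : 0 < (1 + ε)⁻¹ := inv_pos.2 hc
    rw [h3, abs_neg, abs_mul, abs_of_pos (mul_pos hε h5)]
    calc ε * (1 + ε)⁻¹ * |v.2| ≤ ε * 1 * 1 := by gcongr; exact hw v hv
      _ = ε := by ring
  -- In the coordinates of `[-1,1]²` the point is `(u, w)` with `u = ±1` and `|(1 + ε) w| > 1`, so
  -- the first coordinate of its image is `u / |(1 + ε) w|`.
  · change 0 < (squareHomeo L (s, A t)).1 ∧ (squareHomeo L (s, A t)).1 < 1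
    set w : ℝ := 2 * (A t : ℝ) - 1 with hwdef
    set u : ℝ := 2 * (s : ℝ) - 1 with hudef
    have hu : |u| = 1 := by rcases hs with rfl | rfl <;> norm_num [hudef]
    have hw1 : |w| ≤ 1 := abs_le.2 ⟨by linarith [(A t).2.1], by linarith [(A t).2.2]⟩
    have hcw : 1 < |(1 + ε) * w| := by
      rw [abs_mul, abs_of_pos hc]
      exact (inv_lt_iff_one_lt_mul₀' hc).1 hA
    have hn : ‖toPlane (s, A t)‖ = 1 := by
      change max |u| |w| = 1
      rw [hu, max_eq_left hw1]
    have hLn : ‖L (toPlane (s, A t))‖ = |(1 + ε) * w| := by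
      change max |u| |(1 + ε) * w| = _
      rw [hu, max_eq_right hcw.le]
    have h6 := congrArg Prod.fst (toPlane_squareHomeo L (s, A t))
    rw [radial, hn, hLn] at h6
    change 2 * ((squareHomeo L (s, A t)).1 : ℝ) - 1 = (1 / |(1 + ε) * w|) * u at h6
    have h7 : |(1 / |(1 + ε) * w|) * u| < 1 := by
      rw [abs_mul, hu, mul_one, abs_of_pos (by positivity), div_lt_one (by linarith)]
      exact hcw
    rw [← h6] at h7
    obtain ⟨h8, h9⟩ := abs_lt.1 h7
    constructor
    · change (0 : ℝ) < _
      linarith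
    · change _ < (1 : ℝ)
      linarith

/-! ### Moving into the pseudo-interior -/

/-- The self-map of the Hilbert cube which acts as `K` on the pair of coordinates `(j, m)` and fixes
all other coordinates. -/
def liftSquare (j m : ℕ) (K : unitInterval × unitInterval → unitInterval × unitInterval)
    (x : HilbertCube) : HilbertCube :=
  Function.update (Function.update x m (K (x j, x m)).2) j (K (x j, x m)).1

theorem liftSquare_leftInverse {j m : ℕ} (h : m ≠ j)
    {K K' : unitInterval × unitInterval → unitInterval × unitInterval}
    (hK : Function.LeftInverse K' K) :
    Function.LeftInverse (liftSquare j m K') (liftSquare j m K) := by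
  intro x
  have h2 : K' (liftSquare j m K x j, liftSquare j m K x m) = (x j, x m) := by
    rw [show (liftSquare j m K x j, liftSquare j m K x m) = K (x j, x m) by
      simp [liftSquare, h], hK]
  rw [liftSquare, h2]
  funext i
  by_cases hi : i = j
  · subst hi; simp
  by_cases hi' : i = m
  · subst hi'; simp [hi]
  · simp [hi, hi', liftSquare]

theorem continuous_liftSquare (j m : ℕ)
    {K : unitInterval × unitInterval → unitInterval × unitInterval} (hK : Continuous K) :
    Continuous (liftSquare j m K) := by
  have h : Continuous fun x : HilbertCube => K (x j, x m) := by fun_prop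
  exact (continuous_id.update m h.snd).update j h.fst

/-- The self-homeomorphisms of the Hilbert cube, encoded as pairs of mutually inverse continuous
maps with the topology of uniform convergence of both the map and its inverse. -/
abbrev AutPairs : Type :=
  {p : C(HilbertCube, HilbertCube) × C(HilbertCube, HilbertCube) //
    p.1.comp p.2 = ContinuousMap.id _ ∧ p.2.comp p.1 = ContinuousMap.id _}

instance : BaireSpace AutPairs := by
  have hc : IsClosed {p : C(HilbertCube, HilbertCube) × C(HilbertCube, HilbertCube) |
      p.1.comp p.2 = ContinuousMap.id _ ∧ p.2.comp p.1 = ContinuousMap.id _} :=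
    (isClosed_eq (continuous_fst.compCM continuous_snd) continuous_const).inter
      (isClosed_eq (continuous_snd.compCM continuous_fst) continuous_const)
  have : TopologicalSpace.IsCompletelyMetrizableSpace C(HilbertCube, HilbertCube) :=
    TopologicalSpace.IsCompletelyMetrizableSpace.of_completeSpace_metrizable
  have := hc.isCompletelyMetrizableSpace
  exact inferInstanceAs (BaireSpace {p : C(HilbertCube, HilbertCube) × C(HilbertCube, HilbertCube) |
      p.1.comp p.2 = ContinuousMap.id _ ∧ p.2.comp p.1 = ContinuousMap.id _})

/-- Homeomorphisms acting on the coordinates `j` and `j + 1 + n` tend uniformly to the identity as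
soon as their effect on the coordinate `j` does. -/
theorem tendsto_liftSquare (j : ℕ) {ε : ℕ → ℝ} (hε : Filter.Tendsto ε Filter.atTop (𝓝 0))
    (k : ℕ → C(HilbertCube, HilbertCube))
    (K : ℕ → unitInterval × unitInterval → unitInterval × unitInterval)
    (hk : ∀ n x, k n x = liftSquare j (j + 1 + n) (K n) x)
    (hK : ∀ n p, |((K n p).1 : ℝ) - p.1| ≤ ε n) :
    Filter.Tendsto k Filter.atTop (𝓝 (ContinuousMap.id HilbertCube)) := by
  rw [ContinuousMap.tendsto_iff_tendstoUniformly, tendstoUniformly_iff_tendsto, Pi.uniformity,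
    Filter.tendsto_iInf]
  intro i
  rw [Filter.tendsto_comap_iff]
  refine (tendstoUniformly_iff_tendsto (F := fun n x => k n x i) (f := fun x => x i)).1 ?_
  rw [Metric.tendstoUniformly_iff]
  intro δ hδ
  filter_upwards [hε.eventually_lt_const hδ, Filter.eventually_gt_atTop i] with n hn hin x
  rw [hk, dist_comm]
  by_cases hij : i = j
  · subst hij
    rw [liftSquare, Function.update_self]
    exact (hK n _).trans_lt hn
  · have him : i ≠ j + 1 + n := by omega
    simpa [liftSquare, hij, him] using hδ

theorem dense_interior_coord (p : HilbertCube) (j : ℕ) :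
    Dense {h : AutPairs | 0 < h.1.1 p j ∧ h.1.1 p j < 1} := by
  rintro ⟨⟨f, g⟩, hfg, hgf⟩
  by_cases hint : 0 < f p j ∧ f p j < 1
  · exact subset_closure hint
  have hs : f p j = 0 ∨ f p j = 1 := by
    by_contra! h
    exact hint ⟨unitInterval.pos_iff_ne_zero.2 h.1, unitInterval.lt_one_iff_ne_one.2 h.2⟩
  have hε : ∀ n : ℕ, (0 : ℝ) < 1 / ((n : ℝ) + 1) := fun n => by positivity
  choose K hK1 hK2 hK3 using fun n : ℕ =>
    exists_square_homeomorph (hε n) (f p j) (f p (j + 1 + n)) hs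
  have hne : ∀ n, j + 1 + n ≠ j := fun n => by omega
  let k (n : ℕ) : C(HilbertCube, HilbertCube) :=
    ⟨liftSquare j (j + 1 + n) (K n), continuous_liftSquare _ _ (K n).continuous⟩
  let k' (n : ℕ) : C(HilbertCube, HilbertCube) :=
    ⟨liftSquare j (j + 1 + n) (K n).symm, continuous_liftSquare _ _ (K n).symm.continuous⟩
  have hkk' : ∀ n, (k n).comp (k' n) = ContinuousMap.id _ := fun n =>
    ContinuousMap.ext (liftSquare_leftInverse (hne n) (K n).right_inv)
  have hk'k : ∀ n, (k' n).comp (k n) = ContinuousMap.id _ := fun n =>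
    ContinuousMap.ext (liftSquare_leftInverse (hne n) (K n).left_inv)
  have hk : Filter.Tendsto k Filter.atTop (𝓝 (ContinuousMap.id _)) :=
    tendsto_liftSquare j tendsto_one_div_add_atTop_nhds_zero_nat k _ (fun _ _ => rfl) hK1
  have hk' : Filter.Tendsto k' Filter.atTop (𝓝 (ContinuousMap.id _)) :=
    tendsto_liftSquare j tendsto_one_div_add_atTop_nhds_zero_nat k' _ (fun _ _ => rfl) hK2
  have hkf : ∀ n, ((k n).comp f).comp (g.comp (k' n)) = ContinuousMap.id _ := fun n => by
    rw [ContinuousMap.comp_assoc, ← ContinuousMap.comp_assoc f, hfg, ContinuousMap.id_comp, hkk']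
  have hgk : ∀ n, (g.comp (k' n)).comp ((k n).comp f) = ContinuousMap.id _ := fun n => by
    rw [ContinuousMap.comp_assoc, ← ContinuousMap.comp_assoc (k' n), hk'k, ContinuousMap.id_comp,
      hgf]
  refine mem_closure_of_tendsto (f := fun n : ℕ =>
    (⟨((k n).comp f, g.comp (k' n)), hkf n, hgk n⟩ : AutPairs)) (b := Filter.atTop) ?_
    (Filter.Eventually.of_forall fun n => ?_)
  · refine tendsto_subtype_rng.2 (Filter.Tendsto.prodMk_nhds ?_ ?_)
    · exact ((ContinuousMap.continuous_precomp f).tendsto _).comp hk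
    · exact ((ContinuousMap.continuous_postcomp g).tendsto _).comp hk'
  · simpa [k, liftSquare] using hK3 n

theorem exists_homeomorph_interior {ι : Type*} [Finite ι] (f : ι → HilbertCube) :
    ∃ h : HilbertCube ≃ₜ HilbertCube, ∀ k j, 0 < h (f k) j ∧ h (f k) j < 1 := by
  have hopen : ∀ a : ι × ℕ,
      IsOpen {h : AutPairs | 0 < h.1.1 (f a.1) a.2 ∧ h.1.1 (f a.1) a.2 < 1} := by
    intro a
    have hc : Continuous fun h : AutPairs => h.1.1 (f a.1) a.2 :=
      (continuous_apply a.2).comp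
        ((continuous_eval_const (f a.1)).comp continuous_subtype_val.fst)
    exact (isOpen_Ioo (a := (0 : unitInterval)) (b := 1)).preimage hc
  have : Nonempty AutPairs := ⟨⟨(ContinuousMap.id _, ContinuousMap.id _), rfl, rfl⟩⟩
  obtain ⟨⟨⟨h, h'⟩, hh', h'h⟩, hmem⟩ :=
    (dense_iInter_of_isOpen hopen fun a => dense_interior_coord (f a.1) a.2).nonempty
  exact ⟨⟨⟨h, h', DFunLike.congr_fun h'h, DFunLike.congr_fun hh'⟩, h.continuous, h'.continuous⟩,
    fun k j => Set.mem_iInter.1 hmem (k, j)⟩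

/-! ### Standard position -/

/-- Any finite family of distinct points can be moved to any family of distinct constant sequences
with values in `(0,1)`. -/
theorem exists_homeomorph_const {ι : Type*} [Finite ι] (f : ι → HilbertCube)
    (hf : Function.Injective f) (c : ι → unitInterval) (hc : Function.Injective c)
    (hc' : ∀ k, 0 < c k ∧ c k < 1) :
    ∃ h : HilbertCube ≃ₜ HilbertCube, ∀ k, h (f k) = fun _ => c k := by
  classical
  obtain ⟨h₀, hh₀⟩ := exists_homeomorph_interior f
  have hsep : ∀ q : ι × ι, ∃ i, q.1 ≠ q.2 → h₀ (f q.1) i ≠ h₀ (f q.2) i := by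
    intro q
    by_cases hq : q.1 = q.2
    · exact ⟨0, fun h => absurd hq h⟩
    · obtain ⟨i, hi⟩ := Function.ne_iff.1 ((h₀.injective.comp hf).ne hq)
      exact ⟨i, fun _ => hi⟩
  choose d hd using hsep
  obtain ⟨m, hm⟩ := (Set.finite_range d).exists_notMem
  obtain ⟨h₁, hh₁⟩ := exists_homeomorph_of_eqOn (Set.range d) (fun k => h₀ (f k))
    (fun k i => if i ∈ Set.range d then h₀ (f k) i else c k)
    (fun k l hkl => by
      by_contra hne
      exact hd (k, l) hne (congrFun hkl ⟨d (k, l), Set.mem_range_self _⟩))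
    (fun k i hi => (if_pos hi).symm) (fun k i _ => hh₀ k i)
    (fun k i hi => by simpa only [if_neg hi] using hc' k)
  obtain ⟨h₂, hh₂⟩ := exists_homeomorph_of_eqOn {m} (fun k => h₁ (h₀ (f k)))
    (fun k _ => c k)
    (fun k l hkl => by
      have := congrFun hkl ⟨m, rfl⟩
      simp only [hh₁, Set.domRestrict_apply, if_neg hm] at this
      exact hc this)
    (fun k i hi => by rw [hh₁, Set.mem_singleton_iff.1 hi]; exact if_neg hm)
    (fun k i _ => by
      rw [hh₁]
      dsimp only
      split_ifs
      exacts [hh₀ k i, hc' k])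
    (fun k _ _ => hc' k)
  exact ⟨(h₀.trans h₁).trans h₂, hh₂⟩

/-- **Strong homogeneity of the Hilbert cube.** The Hilbert cube is strongly
`n`-homogeneous for every finite `n`: every bijection `e` between two finite subsets
`F` and `G` of the Hilbert cube extends to a self-homeomorphism `h` of the cube. -/
theorem hilbertCube_strongly_homogeneous
    (F G : Set HilbertCube) (hF : F.Finite) (hG : G.Finite) (e : F ≃ G) :
    ∃ h : HilbertCube ≃ₜ HilbertCube, ∀ x : F, h (x : HilbertCube) = (e x : HilbertCube) := by
  have := hF.to_subtype
  have : Infinite (Set.Ioo (0 : unitInterval) 1) := (Set.Ioo_infinite zero_lt_one).to_subtype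
  obtain ⟨c⟩ : Nonempty (F ↪ Set.Ioo (0 : unitInterval) 1) := by
    obtain ⟨n, ⟨e'⟩⟩ := Finite.exists_equiv_fin F
    exact ⟨(e'.toEmbedding.trans Fin.valEmbedding).trans (Infinite.natEmbedding _)⟩
  have hc : Function.Injective fun x => (c x : unitInterval) :=
    Subtype.val_injective.comp c.injective
  obtain ⟨h₁, hh₁⟩ := exists_homeomorph_const (fun x : F => (x : HilbertCube))
    Subtype.val_injective _ hc fun x => (c x).2
  obtain ⟨h₂, hh₂⟩ := exists_homeomorph_const (fun x : F => (e x : HilbertCube))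
    (Subtype.val_injective.comp e.injective) _ hc fun x => (c x).2
  refine ⟨h₁.trans h₂.symm, fun x => ?_⟩
  rw [Homeomorph.trans_apply, hh₁, ← hh₂, Homeomorph.symm_apply_apply]
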